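/- Let V be a real vector space, let g be a positive semidefinite symmetric bilinear form on V, let g' be a symmetric bilinear form on V, and let ε ≥ 0 be such that for every v ∈ V one has e^{-ε}·g(v,v) ≤ g'(v,v) ≤ e^{ε}·g(v,v). Then for all X, Y ∈ V one has |g'(X,Y) − g(X,Y)| ≤ ((e^{ε} − 1)/2)·(g(X,X) + g(Y,Y)). -/

import Mathlib

/-- If `g` is a positive semidefinite symmetric bilinear form, `g'` a symmetric
bilinear form with `e^{-ε}·g(v,v) ≤ g'(v,v) ≤ e^{ε}·g(v,v)` for all `v`, then
`|g'(X,Y) − g(X,Y)| ≤ ((e^{ε} − 1)/2)·(g(X,X) + g(Y,Y))`. -/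
theorem stmt1 {V : Type*} [AddCommGroup V] [Module ℝ V]
    (g g' : LinearMap.BilinForm ℝ V) (hg : g.IsSymm) (hg' : g'.IsSymm)
    (hgpos : ∀ v : V, 0 ≤ g v v)
    (ε : ℝ) (hε : 0 ≤ ε)
    (hbound : ∀ v : V,
      Real.exp (-ε) * g v v ≤ g' v v ∧ g' v v ≤ Real.exp ε * g v v) :
    ∀ X Y : V,
      |g' X Y - g X Y| ≤ ((Real.exp ε - 1) / 2) * (g X X + g Y Y) := by
  intro X Y
  have h1 := Real.add_one_le_exp ε
  have h2 := Real.add_one_le_exp (-ε)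
  have key : ∀ v : V, -((Real.exp ε - 1) * g v v) ≤ g' v v - g v v ∧
      g' v v - g v v ≤ (Real.exp ε - 1) * g v v := by
    intro v
    obtain ⟨ha, hb⟩ := hbound v
    have hc : 0 ≤ (Real.exp ε + Real.exp (-ε) - 2) * g v v :=
      mul_nonneg (by linarith) (hgpos v)
    constructor <;> linarith
  have e1 : g Y X = g X Y := hg.eq Y X
  have e2 : g' Y X = g' X Y := hg'.eq Y X
  obtain ⟨p1, p2⟩ := key (X + Y)
  obtain ⟨m1, m2⟩ := key (X - Y)
  simp only [map_add, map_sub, LinearMap.add_apply, LinearMap.sub_apply, e1, e2] at p1 p2 m1 m2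
  rw [abs_le]
  constructor <;> linarith
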